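/- Let d ≥ 1, let β ∈ (0, 1/2), and let μ be the probability measure on ℝ^d with density proportional to exp(−|x|⁴/4 + β|x|²/2). Then for every compactly supported smooth function f : ℝ^d → ℝ one has Ent_μ(f²) ≤ (4e/(1−2β)) · ∫_{ℝ^d} |∇f|² dμ. In particular, μ satisfies a logarithmic Sobolev inequality with a constant depending only on β and not on the dimension d. -/

import Mathlib

open Real MeasureTheory Finset Matrix Set

noncomputable section

/-- Partial derivative of `f` in the `i`-th coordinate direction. -/
def pd {d : ℕ} (i : Fin d) (f : EuclideanSpace ℝ (Fin d) → ℝ)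
    (x : EuclideanSpace ℝ (Fin d)) : ℝ :=
  fderiv ℝ f x (EuclideanSpace.single i 1)

/-- Laplacian of `f`. -/
def lap {d : ℕ} (f : EuclideanSpace ℝ (Fin d) → ℝ) (x : EuclideanSpace ℝ (Fin d)) : ℝ :=
  ∑ i, pd i (fun y => pd i f y) x

/-- Diffusion operator `L f = Δ f - ∇V ⋅ ∇f` associated with the potential `V`. -/
def diffOp {d : ℕ} (V f : EuclideanSpace ℝ (Fin d) → ℝ) (x : EuclideanSpace ℝ (Fin d)) : ℝ :=
  lap f x - ∑ i, pd i V x * pd i f x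

/-- Hessian matrix of `V` at `x`. -/
def hess {d : ℕ} (V : EuclideanSpace ℝ (Fin d) → ℝ) (x : EuclideanSpace ℝ (Fin d)) :
    Matrix (Fin d) (Fin d) ℝ :=
  Matrix.of fun i j => pd i (fun y => pd j V y) x

/-- Smallest (real) eigenvalue of a matrix: the infimum of its real spectrum. -/
def minEig {d : ℕ} (A : Matrix (Fin d) (Fin d) ℝ) : ℝ :=
  sInf (spectrum ℝ A)

/-- The probability measure with density proportional to `exp (-V)` w.r.t. Lebesgue measure. -/
def gibbs {d : ℕ} (V : EuclideanSpace ℝ (Fin d) → ℝ) : Measure (EuclideanSpace ℝ (Fin d)) :=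
  (∫⁻ x, ENNReal.ofReal (Real.exp (-V x)))⁻¹ •
    volume.withDensity fun x => ENNReal.ofReal (Real.exp (-V x))

/-- Entropy of `g` with respect to the measure `μ`. -/
def entropy {d : ℕ} (μ : Measure (EuclideanSpace ℝ (Fin d)))
    (g : EuclideanSpace ℝ (Fin d) → ℝ) : ℝ :=
  ∫ x, g x * Real.log (g x) ∂μ - (∫ x, g x ∂μ) * Real.log (∫ x, g x ∂μ)

/-- Squared Euclidean norm of the gradient of `f` at `x`. -/
def gradSq {d : ℕ} (f : EuclideanSpace ℝ (Fin d) → ℝ) (x : EuclideanSpace ℝ (Fin d)) : ℝ :=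
  ∑ i, (pd i f x) ^ 2

end

open scoped ENNReal

theorem plAux_bm_compact {K L : Set ℝ} (hK : IsCompact K) (hL : IsCompact L) (hKn : K.Nonempty)
    (hLn : L.Nonempty) {C : Set ℝ} (h : ∀ a ∈ K, ∀ b ∈ L, a + b ∈ C) :
    volume K + volume L ≤ volume C := by
  have hM := hK.sSup_mem hKn
  have hm := hL.sInf_mem hLn
  set M := sSup K
  set m := sInf L
  have h1 : volume ((fun x => m + x) '' K) = volume K := by
    rw [Set.image_add_left]; exact measure_preimage_add _ _ _
  have h2 : volume ((fun x => M + x) '' L) = volume L := by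
    rw [Set.image_add_left]; exact measure_preimage_add _ _ _
  have hmeas : MeasurableSet ((fun x => M + x) '' L) :=
    (hL.image (by fun_prop)).isClosed.measurableSet
  rw [← h1, ← h2, ← measure_union_add_inter _ hmeas]
  have h3 : volume ((fun x => m + x) '' K ∩ (fun x => M + x) '' L) = 0 := by
    refine measure_mono_null (t := {M + m}) ?_ (by simp)
    rintro z ⟨⟨x, hx, rfl⟩, ⟨y, hy, hxy⟩⟩
    have e1 : x ≤ M := le_csSup hK.bddAbove hx
    have e2 : m ≤ y := csInf_le hL.bddBelow hy
    simp only [mem_singleton_iff] at *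
    linarith
  rw [h3, add_zero]
  apply measure_mono
  rintro z (⟨x, hx, rfl⟩ | ⟨y, hy, rfl⟩)
  · have := h x hx m hm
    simpa [add_comm] using this
  · exact h M hM y hy

theorem plAux_bm {A B C : Set ℝ} (hA : MeasurableSet A) (hB : MeasurableSet B) (hAn : A.Nonempty)
    (hBn : B.Nonempty) (h : ∀ a ∈ A, ∀ b ∈ B, a + b ∈ C) :
    volume A + volume B ≤ volume C := by
  rw [hA.measure_eq_iSup_isCompact, hB.measure_eq_iSup_isCompact]
  simp only [iSup_and']
  obtain ⟨a, ha⟩ := hAn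
  obtain ⟨b, hb⟩ := hBn
  refine ENNReal.biSup_add_biSup_le' ⟨∅, by simp⟩ ⟨∅, by simp⟩ ?_
  rintro K ⟨hKA, hK⟩ L ⟨hLB, hL⟩
  refine le_trans (add_le_add (measure_mono (subset_insert a K)) (measure_mono (subset_insert b L)))
    (plAux_bm_compact (hK.insert a) (hL.insert b) ⟨a, by simp⟩ ⟨b, by simp⟩ ?_)
  intro x hx y hy
  apply h
  · rcases hx with rfl | hx
    exacts [ha, hKA hx]
  · rcases hy with rfl | hy
    exacts [hb, hLB hy]

theorem plAux_layer {f : ℝ → ℝ≥0∞} (hf : Measurable f) (h1 : ∀ x, f x ≤ 1) :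
    ∫⁻ x, f x = ∫⁻ l in Ioi (0 : ℝ), volume {x | ENNReal.ofReal l < f x} := by
  have hne : ∀ x, f x ≠ ⊤ := fun x => ((h1 x).trans_lt ENNReal.one_lt_top).ne
  have e := lintegral_eq_lintegral_meas_lt (volume : Measure ℝ) (f := fun x => (f x).toReal)
    (Filter.Eventually.of_forall fun x => ENNReal.toReal_nonneg) hf.ennreal_toReal.aemeasurable
  simp only [ENNReal.ofReal_toReal (hne _)] at e
  rw [e]
  refine setLIntegral_congr_fun measurableSet_Ioi ?_
  intro l hl
  simp only
  congr 1
  ext x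
  exact (ENNReal.ofReal_lt_iff_lt_toReal (le_of_lt hl) (hne x)).symm

theorem plAux_level {t s : ℝ} (ht : 0 < t) (hs : 0 < s) {f g h : ℝ → ℝ≥0∞}
    (hf : Measurable f) (hg : Measurable g) (hh : Measurable h) (hf1 : ⨆ x, f x = 1)
    (hg1 : ⨆ x, g x = 1) (H : ∀ x y, min (f x) (g y) ≤ h (t * x + s * y)) :
    ENNReal.ofReal t * (∫⁻ x, f x) + ENNReal.ofReal s * (∫⁻ x, g x) ≤ ∫⁻ x, h x := by
  have hfle : ∀ x, f x ≤ 1 := fun x => hf1 ▸ le_iSup f x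
  have hgle : ∀ x, g x ≤ 1 := fun x => hg1 ▸ le_iSup g x
  refine le_trans ?_ (lintegral_mono (f := fun x => min (h x) 1) (fun x => min_le_left _ _))
  rw [plAux_layer hf hfle, plAux_layer hg hgle,
    plAux_layer (f := fun x => min (h x) 1) (hh.min measurable_const) (fun x => min_le_right _ _)]
  have anti : ∀ f : ℝ → ℝ≥0∞, Antitone (fun l : ℝ => volume {x | ENNReal.ofReal l < f x}) := by
    intro f a b hab
    apply measure_mono
    intro x hx
    exact lt_of_le_of_lt (ENNReal.ofReal_le_ofReal hab) hx
  rw [← lintegral_const_mul _ (anti f).measurable, ← lintegral_const_mul _ (anti g).measurable,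
    ← lintegral_add_left ((anti f).measurable.const_mul _)]
  refine setLIntegral_mono' measurableSet_Ioi ?_
  intro l hl
  have hl : 0 < l := hl
  rcases lt_or_ge l 1 with hl1 | hl1
  · have hl' : ENNReal.ofReal l < 1 := by simpa using hl1
    obtain ⟨a, ha⟩ := lt_iSup_iff.1 (hf1.symm ▸ hl')
    obtain ⟨b, hb⟩ := lt_iSup_iff.1 (hg1.symm ▸ hl')
    have e1 := Measure.addHaar_smul (volume : Measure ℝ) t {x | ENNReal.ofReal l < f x}
    have e2 := Measure.addHaar_smul (volume : Measure ℝ) s {x | ENNReal.ofReal l < g x}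
    simp only [Module.finrank_self, pow_one, abs_of_pos ht, abs_of_pos hs] at e1 e2
    rw [← e1, ← e2]
    apply plAux_bm
    · exact (measurableSet_lt measurable_const hf).const_smul₀ t
    · exact (measurableSet_lt measurable_const hg).const_smul₀ s
    · exact ⟨t • a, smul_mem_smul_set ha⟩
    · exact ⟨s • b, smul_mem_smul_set hb⟩
    · rintro _ ⟨x, hx, rfl⟩ _ ⟨y, hy, rfl⟩
      have hx : ENNReal.ofReal l < f x := hx
      have hy : ENNReal.ofReal l < g y := hy
      exact lt_min ((lt_min hx hy).trans_le (H x y)) hl'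
  · have : ∀ f : ℝ → ℝ≥0∞, (∀ x, f x ≤ 1) → volume {x | ENNReal.ofReal l < f x} = 0 := by
      intro f hf
      convert measure_empty (μ := (volume : Measure ℝ))
      ext x
      simp only [mem_ofPred_eq, mem_empty_iff_false, iff_false, not_lt]
      exact (hf x).trans (by simpa using hl1)
    rw [this f hfle, this g hgle]
    simp

theorem plAux_amgm {t s : ℝ} (ht : 0 < t) (hs : 0 < s) (hts : t + s = 1) (a b : ℝ≥0∞) :
    a ^ t * b ^ s ≤ ENNReal.ofReal t * a + ENNReal.ofReal s * b := by
  have hpq : (1 / t).HolderConjugate (1 / s) := by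
    rw [Real.holderConjugate_iff]
    refine ⟨?_, by simpa using hts⟩
    rw [lt_div_iff₀ ht]; linarith
  have := ENNReal.young_inequality (a ^ t) (b ^ s) hpq
  rw [← ENNReal.rpow_mul, ← ENNReal.rpow_mul, mul_one_div_cancel ht.ne', mul_one_div_cancel hs.ne',
    ENNReal.rpow_one, ENNReal.rpow_one, one_div, one_div, ENNReal.ofReal_inv_of_pos ht,
    ENNReal.ofReal_inv_of_pos hs, div_eq_mul_inv, div_eq_mul_inv, inv_inv, inv_inv, mul_comm a,
    mul_comm b] at this
  exact this

theorem plAux_bdd {t s : ℝ} (ht : 0 < t) (hs : 0 < s) (hts : t + s = 1) {f g h : ℝ → ℝ≥0∞}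
    (hf : Measurable f) (hg : Measurable g) (hh : Measurable h) (hf1 : ⨆ x, f x ≠ ⊤)
    (hg1 : ⨆ x, g x ≠ ⊤) (H : ∀ x y, f x ^ t * g y ^ s ≤ h (t * x + s * y)) :
    (∫⁻ x, f x) ^ t * (∫⁻ x, g x) ^ s ≤ ∫⁻ x, h x := by
  set M := ⨆ x, f x with hM
  set N := ⨆ x, g x with hN
  rcases eq_or_ne M 0 with hM0 | hM0
  · have : ∀ x, f x = 0 := fun x => le_antisymm (hM0 ▸ le_iSup f x) bot_le
    simp [this, ht]
  rcases eq_or_ne N 0 with hN0 | hN0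
  · have : ∀ x, g x = 0 := fun x => le_antisymm (hN0 ▸ le_iSup g x) bot_le
    simp [this, hs]
  set P := M ^ t * N ^ s with hP
  have hP0 : P ≠ 0 := by simp [hP, hM0, hN0, hf1, hg1, ENNReal.rpow_eq_zero_iff]
  have hPt : P ≠ ⊤ := ENNReal.mul_ne_top (ENNReal.rpow_ne_top_of_nonneg ht.le hf1)
    (ENNReal.rpow_ne_top_of_nonneg hs.le hg1)
  have hPinv : P⁻¹ = (M⁻¹) ^ t * (N⁻¹) ^ s := by
    rw [hP, ENNReal.mul_inv, ENNReal.inv_rpow, ENNReal.inv_rpow]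
    · left; simp [hM0, hf1, ENNReal.rpow_eq_zero_iff]
    · left; exact ENNReal.rpow_ne_top_of_nonneg ht.le hf1
  have key : ∀ a b : ℝ≥0∞, (M⁻¹ * a) ^ t * (N⁻¹ * b) ^ s = P⁻¹ * (a ^ t * b ^ s) := by
    intro a b
    rw [hPinv, ENNReal.mul_rpow_of_nonneg _ _ ht.le, ENNReal.mul_rpow_of_nonneg _ _ hs.le]
    ring
  have lev := plAux_level ht hs (f := fun x => M⁻¹ * f x) (g := fun x => N⁻¹ * g x)
    (h := fun x => P⁻¹ * h x) (hf.const_mul _) (hg.const_mul _) (hh.const_mul _)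
    (by rw [← ENNReal.mul_iSup]; exact ENNReal.inv_mul_cancel hM0 hf1)
    (by rw [← ENNReal.mul_iSup]; exact ENNReal.inv_mul_cancel hN0 hg1)
    (by
      intro x y
      refine le_trans ?_ (mul_le_mul_right (H x y) P⁻¹)
      rw [← key]
      set c := min (M⁻¹ * f x) (N⁻¹ * g y)
      calc c = c ^ t * c ^ s := by
            rw [← ENNReal.rpow_add_of_nonneg _ _ ht.le hs.le, hts, ENNReal.rpow_one]
        _ ≤ _ := by gcongr; exacts [min_le_left _ _, min_le_right _ _])
  have lev2 := (plAux_amgm ht hs hts _ _).trans lev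
  rw [lintegral_const_mul _ hf, lintegral_const_mul _ hg, lintegral_const_mul _ hh, key] at lev2
  exact (ENNReal.mul_le_mul_iff_right (ENNReal.inv_ne_zero.2 hPt) (ENNReal.inv_ne_top.2 hP0)).1 lev2

def PLprop (E : Type) [MeasureSpace E] [AddCommGroup E] [Module ℝ E] : Prop :=
  ∀ t s : ℝ, 0 < t → 0 < s → t + s = 1 → ∀ f g h : E → ℝ≥0∞, Measurable f → Measurable g →
    Measurable h → (∀ x y, f x ^ t * g y ^ s ≤ h (t • x + s • y)) →
    (∫⁻ x, f x) ^ t * (∫⁻ x, g x) ^ s ≤ ∫⁻ x, h x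

theorem plAux_trunc {f : ℝ → ℝ≥0∞} (hf : Measurable f) :
    Filter.Tendsto (fun n : ℕ => ∫⁻ x, min (f x) n) Filter.atTop (nhds (∫⁻ x, f x)) := by
  apply lintegral_tendsto_of_tendsto_of_monotone
  · exact fun n => (hf.min measurable_const).aemeasurable
  · refine Filter.Eventually.of_forall fun x a b hab => ?_
    simp only
    gcongr
  · refine Filter.Eventually.of_forall fun x => ?_
    have := (tendsto_const_nhds (x := f x) (f := Filter.atTop)).min ENNReal.tendsto_nat_nhds_top
    simpa using this

theorem PLprop_real : PLprop ℝ := by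
  intro t s ht hs hts f g h hf hg hh H
  rcases eq_or_ne (∫⁻ x, f x) 0 with hf0 | hf0
  · simp [hf0, ht]
  rcases eq_or_ne (∫⁻ x, g x) 0 with hg0 | hg0
  · simp [hg0, hs]
  have T := ENNReal.Tendsto.mul
    ((ENNReal.continuous_rpow_const (y := t)).continuousAt.tendsto.comp (plAux_trunc hf))
    (Or.inl (by simp [ENNReal.rpow_eq_zero_iff, hf0, not_lt.2 ht.le]))
    ((ENNReal.continuous_rpow_const (y := s)).continuousAt.tendsto.comp (plAux_trunc hg))
    (Or.inl (by simp [ENNReal.rpow_eq_zero_iff, hg0, not_lt.2 hs.le]))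
  refine le_of_tendsto' T fun n => ?_
  have bd : ∀ f : ℝ → ℝ≥0∞, ⨆ x, min (f x) (n : ℝ≥0∞) ≠ ⊤ := fun f =>
    ((iSup_le fun x => min_le_right _ _).trans_lt (ENNReal.natCast_lt_top n)).ne
  refine plAux_bdd ht hs hts (hf.min measurable_const) (hg.min measurable_const) hh (bd f) (bd g) ?_
  intro x y
  refine le_trans ?_ (H x y)
  gcongr
  exacts [min_le_left _ _, min_le_left _ _]

theorem PLprop_prod {E F : Type} [MeasureSpace E] [AddCommGroup E] [Module ℝ E]
    [MeasureSpace F] [AddCommGroup F] [Module ℝ F] [SFinite (volume : Measure F)]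
    [SFinite (volume : Measure E)] (hE : PLprop E) (hF : PLprop F) : PLprop (E × F) := by
  intro t s ht hs hts f g h hf hg hh H
  rw [Measure.volume_eq_prod, lintegral_prod _ hf.aemeasurable, lintegral_prod _ hg.aemeasurable,
    lintegral_prod _ hh.aemeasurable]
  refine hE t s ht hs hts _ _ _ hf.lintegral_prod_right' hg.lintegral_prod_right'
    hh.lintegral_prod_right' ?_
  intro x y
  refine hF t s ht hs hts _ _ _ (hf.comp measurable_prodMk_left) (hg.comp measurable_prodMk_left)
    (hh.comp measurable_prodMk_left) ?_
  intro x' y'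
  exact H (x, x') (y, y')

theorem PLprop_equiv {E F : Type} [MeasureSpace E] [AddCommGroup E] [Module ℝ E]
    [MeasureSpace F] [AddCommGroup F] [Module ℝ F] (hE : PLprop E) (e : E → F)
    (he : MeasurePreserving e) (hl : ∀ (t s : ℝ) x y, e (t • x + s • y) = t • e x + s • e y) :
    PLprop F := by
  intro t s ht hs hts f g h hf hg hh H
  rw [← he.lintegral_comp hf, ← he.lintegral_comp hg, ← he.lintegral_comp hh]
  refine hE t s ht hs hts _ _ _ (hf.comp he.measurable) (hg.comp he.measurable)
    (hh.comp he.measurable) ?_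
  intro x y
  rw [hl]
  exact H _ _

theorem PLprop_pi (n : ℕ) : PLprop (Fin n → ℝ) := by
  induction n with
  | zero =>
    intro t s ht hs hts f g h hf hg hh H
    rw [Measure.volume_pi_eq_dirac 0, lintegral_dirac, lintegral_dirac, lintegral_dirac]
    simpa using H 0 0
  | succ n ih =>
    refine PLprop_equiv (PLprop_prod PLprop_real ih)
      (MeasurableEquiv.piFinSuccAbove (fun _ => ℝ) 0).symm
      (volume_preserving_piFinSuccAbove (fun _ : Fin (n + 1) => ℝ) 0).symm ?_
    intro t s x y
    ext i
    refine Fin.cases ?_ (fun j => ?_) i <;>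
    simp [MeasurableEquiv.piFinSuccAbove]

theorem PLprop_euclidean (n : ℕ) : PLprop (EuclideanSpace ℝ (Fin n)) :=
  PLprop_equiv (PLprop_pi n) (WithLp.toLp 2) (PiLp.volume_preserving_toLp (Fin n))
    (fun t s x y => by simp)

theorem lsAux_integrable {E : Type*} [TopologicalSpace E] [MeasurableSpace E] [BorelSpace E]
    (ν : Measure E) [IsProbabilityMeasure ν] {g G : E → ℝ} (hg : Continuous g) (hG : Continuous G)
    {K : ℝ} (hgK : ∀ x, |g x| ≤ K) (hGK : ∀ x, |G x| ≤ K) (F : ℝ → ℝ → ℝ)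
    (hF : Continuous (fun p : ℝ × ℝ => F p.1 p.2)) : Integrable (fun x => F (g x) (G x)) ν := by
  obtain ⟨C, hC⟩ := ((isCompact_Icc (a := -K) (b := K)).prod
    (isCompact_Icc (a := -K) (b := K))).exists_bound_of_continuousOn hF.continuousOn
  refine Integrable.of_bound (C := C) ?_ (Filter.Eventually.of_forall fun x => ?_)
  · have : Continuous (fun x => F (g x) (G x)) := hF.comp (hg.prodMk hG)
    exact this.measurable.aestronglyMeasurable
  · exact hC (g x, G x) ⟨abs_le.1 (hgK x), abs_le.1 (hGK x)⟩

theorem lsAux_lower {E : Type*} [TopologicalSpace E] [MeasurableSpace E] [BorelSpace E]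
    (ν : Measure E) [IsProbabilityMeasure ν] {g : E → ℝ} (hg : Continuous g)
    {K : ℝ} (hgK : ∀ x, |g x| ≤ K) {s : ℝ} (hs1 : s < 1) :
    (∫ x, exp (g x) ∂ν) + s * ((∫ x, g x * exp (g x) ∂ν) -
      (∫ x, exp (g x) ∂ν) * log (∫ x, exp (g x) ∂ν)) ≤
    (∫ x, exp (g x / (1 - s)) ∂ν) ^ (1 - s) := by
  have int := fun F hF => lsAux_integrable ν hg hg hgK hgK F hF
  have i1 : Integrable (fun x => exp (g x)) ν := int (fun a _ => exp a) (by fun_prop)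
  have i2 : Integrable (fun x => g x * exp (g x)) ν := int (fun a _ => a * exp a) (by fun_prop)
  have i3 : Integrable (fun x => exp (g x / (1 - s))) ν :=
    int (fun a _ => exp (a / (1 - s))) (by fun_prop)
  set I := ∫ x, exp (g x) ∂ν with hI
  set J := ∫ x, g x * exp (g x) ∂ν with hJ
  have hIpos : 0 < I := integral_exp_pos i1
  have h1s : 0 < 1 - s := by linarith
  set r := s / (1 - s) with hr
  set m := J / I with hm
  have hmI : m * I = J := by rw [hm]; field_simp
  have low : exp (r * m) * I ≤ ∫ x, exp (g x / (1 - s)) ∂ν := by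
    have : ∫ x, exp (r * m) * ((1 - r * m) * exp (g x) + r * (g x * exp (g x))) ∂ν
        = exp (r * m) * I := by
      rw [integral_const_mul, integral_add (i1.const_mul _) (i2.const_mul _), integral_const_mul,
        integral_const_mul, ← hI, ← hJ, ← hmI]
      ring
    rw [← this]
    refine integral_mono (((i1.const_mul _).add (i2.const_mul _)).const_mul _) i3 ?_
    intro x
    have e : g x / (1 - s) = g x + r * g x := by rw [hr]; field_simp; ring
    have e2 : exp (g x / (1 - s)) = exp (g x) * exp (r * m) * exp (r * g x - r * m) := by
      rw [e, ← exp_add, ← exp_add]; congr 1; ring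
    simp only
    rw [e2]
    have := add_one_le_exp (r * g x - r * m)
    calc _ = exp (g x) * exp (r * m) * (r * g x - r * m + 1) := by ring
      _ ≤ _ := by gcongr
  calc I + s * (J - I * log I) = I * (s * (m - log I) + 1) := by rw [← hmI]; ring
    _ ≤ I * exp (s * (m - log I)) := by gcongr; exact add_one_le_exp _
    _ = (exp (r * m) * I) ^ (1 - s) := by
      rw [mul_rpow (exp_pos _).le hIpos.le, ← exp_mul, rpow_def_of_pos hIpos]
      nth_rw 1 [← exp_log hIpos]
      rw [← exp_add, ← exp_add]
      congr 1
      rw [hr]; field_simp; ring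
    _ ≤ _ := by
      apply rpow_le_rpow (by positivity) low h1s.le

theorem lsAux_limit {E : Type*} [TopologicalSpace E] [MeasurableSpace E] [BorelSpace E]
    (ν : Measure E) [IsProbabilityMeasure ν] {g G : E → ℝ} (hg : Continuous g) (hG : Continuous G)
    {K : ℝ} (hgK : ∀ x, |g x| ≤ K) (hGK : ∀ x, |G x| ≤ K) {ρ M : ℝ} (hρ : 0 < ρ)
    (H : ∀ s : ℝ, 0 < s → s < 1 → 0 < ρ * (1 - s) - M * s →
      (∫ x, exp (g x / (1 - s)) ∂ν) ^ (1 - s) ≤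
        ∫ x, exp (g x + s * (G x / (2 * (ρ * (1 - s) - M * s)))) ∂ν) :
    (∫ x, g x * exp (g x) ∂ν) - (∫ x, exp (g x) ∂ν) * log (∫ x, exp (g x) ∂ν) ≤
      1 / (2 * ρ) * ∫ x, exp (g x) * G x ∂ν := by
  have int := fun F hF => lsAux_integrable ν hg hG hgK hGK F hF
  have i1 : Integrable (fun x => exp (g x)) ν := int (fun a _ => exp a) (by fun_prop)
  have i2 : Integrable (fun x => exp (g x) * G x) ν := int (fun a b => exp a * b) (by fun_prop)
  have i3 : Integrable (fun x => exp (g x) * G x ^ 2) ν :=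
    int (fun a b => exp a * b ^ 2) (by fun_prop)
  set c : ℝ → ℝ := fun s => 1 / (2 * (ρ * (1 - s) - M * s)) with hc
  have hc0 : ContinuousAt c 0 := by
    apply ContinuousAt.div (by fun_prop) (by fun_prop)
    simp [hρ.ne']
  have hc00 : c 0 = 1 / (2 * ρ) := by simp [hc]
  have T : Filter.Tendsto (fun s => c s * (∫ x, exp (g x) * G x ∂ν) +
      s * c s ^ 2 * ∫ x, exp (g x) * G x ^ 2 ∂ν) (nhdsWithin 0 (Ioi 0))
      (nhds (1 / (2 * ρ) * ∫ x, exp (g x) * G x ∂ν)) := by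
    have : ContinuousAt (fun s => c s * (∫ x, exp (g x) * G x ∂ν) +
      s * c s ^ 2 * ∫ x, exp (g x) * G x ^ 2 ∂ν) 0 := by fun_prop
    have := this.tendsto
    simp only [hc00, zero_mul, add_zero] at this
    exact this.mono_left nhdsWithin_le_nhds
  refine ge_of_tendsto T ?_
  have ev1 : ∀ᶠ s in nhdsWithin (0:ℝ) (Ioi 0), s < 1 :=
    nhdsWithin_le_nhds (eventually_lt_nhds (by norm_num))
  have ev2 : ∀ᶠ s in nhdsWithin (0:ℝ) (Ioi 0), 0 < ρ * (1 - s) - M * s := by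
    apply nhdsWithin_le_nhds
    have : ContinuousAt (fun s => ρ * (1 - s) - M * s) 0 := by fun_prop
    exact this.eventually_const_lt (by simpa using hρ)
  have ev3 : ∀ᶠ s in nhdsWithin (0:ℝ) (Ioi 0), s * c s * K < 1 := by
    apply nhdsWithin_le_nhds
    have : ContinuousAt (fun s => s * c s * K) 0 := by fun_prop
    exact this.eventually_lt_const (by simp)
  filter_upwards [ev1, ev2, ev3, self_mem_nhdsWithin] with s h1 h2 h3 h4
  have h4 : 0 < s := h4
  have low := (lsAux_lower ν hg hgK h1).trans (H s h4 h1 h2)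
  have hcs : 0 < c s := by simp only [hc]; positivity
  have up : ∫ x, exp (g x + s * (G x / (2 * (ρ * (1 - s) - M * s)))) ∂ν ≤
      ∫ x, (exp (g x) + s * c s * (exp (g x) * G x) + (s * c s) ^ 2 * (exp (g x) * G x ^ 2)) ∂ν := by
    refine integral_mono (int (fun a b => exp (a + s * (b / (2 * (ρ * (1 - s) - M * s)))))
      (by fun_prop)) ((i1.add (i2.const_mul _)).add (i3.const_mul _)) ?_
    intro x
    simp only
    have e : s * (G x / (2 * (ρ * (1 - s) - M * s))) = s * c s * G x := by
      simp only [hc]; ring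
    have hab : |s * c s * G x| ≤ 1 := by
      rw [abs_mul, abs_of_pos (by positivity)]
      refine le_trans ?_ h3.le
      gcongr
      exact hGK x
    have := (abs_le.1 (abs_exp_sub_one_sub_id_le hab)).2
    rw [e, exp_add]
    calc exp (g x) * exp (s * c s * G x)
        ≤ exp (g x) * (1 + s * c s * G x + (s * c s * G x) ^ 2) := by gcongr; linarith
      _ = _ := by ring
  have i4 : Integrable (fun x => exp (g x) + s * c s * (exp (g x) * G x)) ν :=
    i1.add (i2.const_mul _)
  rw [integral_add i4 (i3.const_mul _), integral_add i1 (i2.const_mul _), integral_const_mul,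
    integral_const_mul] at up
  have fin := low.trans up
  rw [← mul_le_mul_iff_right₀ h4]
  nlinarith [fin]

theorem lsAux_quad {d : ℕ} {φ : EuclideanSpace ℝ (Fin d) → ℝ} (h : ContDiff ℝ (⊤ : ℕ∞) φ)
    (hc : HasCompactSupport (fderiv ℝ φ)) : ∃ M : ℝ, 0 ≤ M ∧ ∀ x z,
      φ x ≤ φ z + fderiv ℝ φ z (x - z) + M * ‖x - z‖ ^ 2 := by
  have h' : ContDiff ℝ 1 (fderiv ℝ φ) := h.fderiv_right (by norm_cast)
  obtain ⟨C, hC⟩ := ContDiff.lipschitzWith_of_hasCompactSupport hc h' one_ne_zero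
  refine ⟨C, C.2, fun x z => ?_⟩
  have := (convex_segment z x).norm_image_sub_le_of_norm_fderiv_le' (𝕜 := ℝ) (f := φ)
    (φ := fderiv ℝ φ z) (C := C * ‖x - z‖)
    (fun w _ => (h.differentiable (by simp)).differentiableAt) (fun w hw => by
      refine (hC.norm_sub_le w z).trans ?_
      gcongr
      obtain ⟨a, b, ha, hb, hab, rfl⟩ := hw
      have e : a • z + b • x - z = b • (x - z) := by
        have : a = 1 - b := by linarith
        rw [this]; module
      rw [e, norm_smul, Real.norm_of_nonneg hb]
      have : b ≤ 1 := by linarith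
      exact mul_le_of_le_one_left (norm_nonneg _) this) (left_mem_segment ℝ z x)
      (right_mem_segment ℝ z x)
  have := (le_abs_self _).trans this
  nlinarith [this]

theorem lsAux_fderiv_sum {d : ℕ} (φ : EuclideanSpace ℝ (Fin d) → ℝ) (z k) :
    fderiv ℝ φ z k = ∑ i, pd i φ z * k i := by
  have : k = ∑ i, k i • EuclideanSpace.single i (1 : ℝ) := by
    ext j
    simp [Finset.sum_apply, Pi.single_apply]
  conv_lhs => rw [this]
  simp [pd, mul_comm]

theorem lsAux_young {d : ℕ} (φ : EuclideanSpace ℝ (Fin d) → ℝ) (z k) {q : ℝ} (hq : 0 < q) :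
    fderiv ℝ φ z k - q / 2 * ‖k‖ ^ 2 ≤ gradSq φ z / (2 * q) := by
  rw [lsAux_fderiv_sum, EuclideanSpace.real_norm_sq_eq, gradSq, Finset.mul_sum, Finset.sum_div,
    ← Finset.sum_sub_distrib]
  refine Finset.sum_le_sum fun i _ => ?_
  rw [le_div_iff₀ (by positivity)]
  nlinarith [sq_nonneg (pd i φ z - q * k i)]

theorem gbAux_lintegral {d : ℕ} {U : EuclideanSpace ℝ (Fin d) → ℝ} (hU : Continuous U)
    {φ : EuclideanSpace ℝ (Fin d) → ℝ≥0∞} (hφ : Measurable φ) :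
    ∫⁻ x, φ x ∂(gibbs U) = (∫⁻ x, ENNReal.ofReal (exp (-U x)))⁻¹ *
      ∫⁻ x, ENNReal.ofReal (exp (-U x)) * φ x := by
  rw [gibbs, lintegral_smul_measure, lintegral_withDensity_eq_lintegral_mul _ _ hφ]
  · rfl
  · have : Measurable U := hU.measurable
    fun_prop

theorem gbAux_Z {d : ℕ} {U : EuclideanSpace ℝ (Fin d) → ℝ}
    (hi : Integrable (fun x => exp (-U x))) :
    (∫⁻ x, ENNReal.ofReal (exp (-U x))) = ENNReal.ofReal (∫ x, exp (-U x)) :=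
  (ofReal_integral_eq_lintegral_ofReal hi
    (Filter.Eventually.of_forall fun _ => (exp_pos _).le)).symm

theorem gbAux_prob {d : ℕ} {U : EuclideanSpace ℝ (Fin d) → ℝ} (hU : Continuous U)
    (hi : Integrable (fun x => exp (-U x))) : IsProbabilityMeasure (gibbs U) := by
  constructor
  have := gbAux_lintegral hU (φ := fun _ => 1) measurable_const
  simp only [lintegral_one, mul_one] at this
  rw [this, gbAux_Z hi]
  have := integral_exp_pos hi
  exact ENNReal.inv_mul_cancel (by simpa using this) (by simp)

theorem gbAux_integral {d : ℕ} {U : EuclideanSpace ℝ (Fin d) → ℝ} (hU : Continuous U)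
    (hi : Integrable (fun x => exp (-U x))) (φ : EuclideanSpace ℝ (Fin d) → ℝ) :
    ∫ x, φ x ∂(gibbs U) = (∫ x, exp (-U x))⁻¹ * ∫ x, exp (-U x) * φ x := by
  rw [gibbs, integral_smul_measure, integral_withDensity_eq_integral_toReal_smul, gbAux_Z hi,
    ENNReal.toReal_inv, ENNReal.toReal_ofReal (integral_exp_pos hi).le, smul_eq_mul]
  · simp [ENNReal.toReal_ofReal (exp_pos _).le]
  · have : Measurable U := hU.measurable
    fun_prop
  · simp

theorem lsAux_PL {d : ℕ} {U : EuclideanSpace ℝ (Fin d) → ℝ} (hU : Continuous U)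
    (hi : Integrable (fun x => exp (-U x))) {ρ : ℝ}
    (hconv : ∀ t s : ℝ, 0 < t → 0 < s → t + s = 1 → ∀ x y,
      U (t • x + s • y) + ρ * t * s / 2 * ‖x - y‖ ^ 2 ≤ t * U x + s * U y)
    {g : EuclideanSpace ℝ (Fin d) → ℝ} (hg : Continuous g) (hG : Continuous (gradSq g)) {M : ℝ}
    (hM : ∀ x z, g x ≤ g z + fderiv ℝ g z (x - z) + M * ‖x - z‖ ^ 2)
    {K : ℝ} (hgK : ∀ x, |g x| ≤ K) (hGK : ∀ x, |gradSq g x| ≤ K)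
    (s : ℝ) (hs : 0 < s) (hs1 : s < 1) (hq : 0 < ρ * (1 - s) - 2 * M * s) :
    (∫ x, exp (g x / (1 - s)) ∂(gibbs U)) ^ (1 - s) ≤
        ∫ x, exp (g x + s * (gradSq g x / (2 * (ρ * (1 - s) - 2 * M * s)))) ∂(gibbs U) := by
  have := gbAux_prob hU hi
  have h1s : 0 < 1 - s := by linarith
  have int := fun F hF => lsAux_integrable (gibbs U) hg hG hgK hGK F hF
  have i1 : Integrable (fun x => exp (g x / (1 - s))) (gibbs U) :=
    int (fun a _ => exp (a / (1 - s))) (by fun_prop)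
  set w : EuclideanSpace ℝ (Fin d) → ℝ :=
    fun x => g x + s * (gradSq g x / (2 * (ρ * (1 - s) - 2 * M * s))) with hw
  have hwc : Continuous w := by fun_prop
  have i2 : Integrable (fun x => exp (w x)) (gibbs U) :=
    int (fun a b => exp (a + s * (b / (2 * (ρ * (1 - s) - 2 * M * s))))) (by fun_prop)
  change _ ≤ ∫ x, exp (w x) ∂(gibbs U)
  rw [← ENNReal.ofReal_le_ofReal_iff (integral_nonneg fun _ => (exp_pos _).le),
    ← ENNReal.ofReal_rpow_of_nonneg (integral_nonneg fun _ => (exp_pos _).le) h1s.le,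
    ofReal_integral_eq_lintegral_ofReal i1 (Filter.Eventually.of_forall fun _ => (exp_pos _).le),
    ofReal_integral_eq_lintegral_ofReal i2 (Filter.Eventually.of_forall fun _ => (exp_pos _).le)]
  have mU : Measurable U := hU.measurable
  have mg : Measurable g := hg.measurable
  have mw : Measurable w := hwc.measurable
  rw [gbAux_lintegral hU (by fun_prop), gbAux_lintegral hU (by fun_prop)]
  have pl := PLprop_euclidean d (1 - s) s h1s hs (by ring)
    (fun x => ENNReal.ofReal (exp (-U x)) * ENNReal.ofReal (exp (g x / (1 - s))))
    (fun x => ENNReal.ofReal (exp (-U x)))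
    (fun x => ENNReal.ofReal (exp (-U x)) * ENNReal.ofReal (exp (w x)))
    (by fun_prop) (by fun_prop) (by fun_prop) (by
      intro x y
      rw [← ENNReal.ofReal_mul (exp_pos _).le, ← ENNReal.ofReal_mul (exp_pos _).le,
        ENNReal.ofReal_rpow_of_nonneg (by positivity) h1s.le,
        ENNReal.ofReal_rpow_of_nonneg (by positivity) hs.le, ← ENNReal.ofReal_mul (by positivity),
        ← exp_add, ← exp_add, ← exp_mul, ← exp_mul, ← exp_add]
      apply ENNReal.ofReal_le_ofReal
      apply exp_le_exp.2
      set z := (1 - s) • x + s • y with hz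
      have e1 : x - z = s • (x - y) := by rw [hz]; module
      have a1 := hM x z
      rw [e1, norm_smul, map_smul, Real.norm_of_nonneg hs.le, smul_eq_mul] at a1
      have a2 := lsAux_young g z (x - y) hq
      have a3 := hconv (1 - s) s h1s hs (by ring) x y
      rw [← hz] at a3
      have a4 := mul_le_mul_of_nonneg_left a2 hs.le
      have e2 : (-U x + g x / (1 - s)) * (1 - s) = - U x * (1 - s) + g x := by
        field_simp
      rw [e2]
      simp only [hw]
      nlinarith [a1, a3, a4])
  set Z := ∫⁻ x, ENNReal.ofReal (exp (-U x)) with hZ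
  have hZ0 : Z ≠ 0 := by rw [hZ, gbAux_Z hi]; simpa using integral_exp_pos hi
  have hZt : Z ≠ ⊤ := by rw [hZ, gbAux_Z hi]; simp
  refine le_trans (le_of_eq ?_) (mul_le_mul_right pl Z⁻¹)
  have e3 : Z⁻¹ = Z⁻¹ ^ (1 - s) * Z⁻¹ ^ s := by
    rw [← ENNReal.rpow_add_of_nonneg _ _ h1s.le hs.le]; simp
  have e4 : Z⁻¹ ^ s * Z ^ s = 1 := by
    rw [← ENNReal.mul_rpow_of_nonneg _ _ hs.le, ENNReal.inv_mul_cancel hZ0 hZt, ENNReal.one_rpow]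
  rw [ENNReal.mul_rpow_of_nonneg _ _ h1s.le]
  conv_rhs => rw [e3]
  rw [mul_mul_mul_comm, e4, mul_one]

theorem lsAux_BE {d : ℕ} {U : EuclideanSpace ℝ (Fin d) → ℝ} (hU : Continuous U)
    (hi : Integrable (fun x => exp (-U x))) {ρ : ℝ} (hρ : 0 < ρ)
    (hconv : ∀ t s : ℝ, 0 < t → 0 < s → t + s = 1 → ∀ x y,
      U (t • x + s • y) + ρ * t * s / 2 * ‖x - y‖ ^ 2 ≤ t * U x + s * U y)
    {f : EuclideanSpace ℝ (Fin d) → ℝ} (hf : ContDiff ℝ (⊤ : ℕ∞) f) (hfc : HasCompactSupport f)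
    {ε : ℝ} (hε : 0 < ε) :
    entropy (gibbs U) (fun x => f x ^ 2 + ε) ≤ 2 / ρ * ∫ x, gradSq f x ∂(gibbs U) := by
  have hprob := gbAux_prob hU hi
  have hpos : ∀ x, 0 < f x ^ 2 + ε := fun x => by positivity
  set g : EuclideanSpace ℝ (Fin d) → ℝ := fun x => log (f x ^ 2 + ε) with hg
  have hexp : ∀ x, exp (g x) = f x ^ 2 + ε := fun x => exp_log (hpos x)
  have hgs : ContDiff ℝ (⊤ : ℕ∞) g := ((hf.pow 2).add contDiff_const).log fun x => (hpos x).ne'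
  have hsupp : HasCompactSupport (fun x => g x - log ε) := by
    refine hfc.mono ?_
    intro x hx hfx
    apply hx
    simp [hg, hfx]
  have hfd : fderiv ℝ (fun x => g x - log ε) = fderiv ℝ g := by
    ext1 x; rw [fderiv_sub_const]
  have hdsupp : HasCompactSupport (fderiv ℝ g) := hfd ▸ hsupp.fderiv ℝ
  obtain ⟨M, hM0, hM⟩ := lsAux_quad hgs hdsupp
  have pdc : ∀ φ : EuclideanSpace ℝ (Fin d) → ℝ, ContDiff ℝ (⊤ : ℕ∞) φ →
      Continuous (gradSq φ) := by
    intro φ hφ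
    have : Continuous (fderiv ℝ φ) := hφ.continuous_fderiv (by simp)
    unfold gradSq pd
    fun_prop
  have supp : ∀ φ : EuclideanSpace ℝ (Fin d) → ℝ, HasCompactSupport (fderiv ℝ φ) →
      HasCompactSupport (gradSq φ) := by
    intro φ hφ
    refine hφ.mono ?_
    intro x hx h0
    apply hx
    simp [gradSq, pd, h0]
  have hG := pdc g hgs
  obtain ⟨K1, hK1⟩ := hsupp.exists_bound_of_continuous (hgs.continuous.sub continuous_const)
  obtain ⟨K2, hK2⟩ := (supp g hdsupp).exists_bound_of_continuous hG
  obtain ⟨K3, hK3⟩ := (supp f (hfc.fderiv ℝ)).exists_bound_of_continuous (pdc f hf)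
  simp only [Real.norm_eq_abs] at hK1 hK2 hK3
  set K := max (K1 + |log ε|) K2
  have hgK : ∀ x, |g x| ≤ K := by
    intro x
    refine le_trans ?_ (le_max_left _ _)
    have := abs_add_le (g x - log ε) (log ε)
    rw [sub_add_cancel] at this
    linarith [hK1 x]
  have hGK : ∀ x, |gradSq g x| ≤ K := fun x => (hK2 x).trans (le_max_right _ _)
  have main := lsAux_limit (gibbs U) hgs.continuous hG hgK hGK hρ (M := 2 * M)
    (fun s hs hs1 hq => lsAux_PL hU hi hconv hgs.continuous hG hM hgK hGK s hs hs1 hq)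
  have e0 : entropy (gibbs U) (fun x => f x ^ 2 + ε) = (∫ x, g x * exp (g x) ∂(gibbs U)) -
      (∫ x, exp (g x) ∂(gibbs U)) * log (∫ x, exp (g x) ∂(gibbs U)) := by
    simp only [entropy, hexp]
    simp only [hg, mul_comm]
  rw [e0]
  refine main.trans ?_
  have hpd : ∀ i x, pd i g x = 2 * f x * pd i f x / (f x ^ 2 + ε) := by
    intro i x
    have hd : HasFDerivAt f (fderiv ℝ f x) x := (hf.differentiable (by simp) x).hasFDerivAt
    have := (((hd.pow 2).add_const ε).log (hpos x).ne').fderiv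
    simp only [pd, hg]
    rw [this]
    simp
    ring
  have le : ∀ x, exp (g x) * gradSq g x ≤ 4 * gradSq f x := by
    intro x
    simp only [gradSq, hexp, Finset.mul_sum]
    refine Finset.sum_le_sum fun i _ => ?_
    rw [hpd, div_pow, ← mul_div_assoc, div_le_iff₀ (by have := hpos x; positivity)]
    have h1 := hpos x
    have : (0:ℝ) ≤ (f x ^ 2 + ε) * pd i f x ^ 2 * ε := by positivity
    nlinarith [this]
  have i1 : Integrable (fun x => exp (g x) * gradSq g x) (gibbs U) :=
    lsAux_integrable (gibbs U) hgs.continuous hG hgK hGK (fun a b => exp a * b) (by fun_prop)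
  have i2 : Integrable (gradSq f) (gibbs U) :=
    lsAux_integrable (gibbs U) (pdc f hf) (pdc f hf) hK3 hK3 (fun a _ => a) (by fun_prop)
  have := integral_mono i1 (i2.const_mul 4) le
  rw [integral_const_mul] at this
  calc _ ≤ 1 / (2 * ρ) * (4 * ∫ x, gradSq f x ∂(gibbs U)) := by gcongr
    _ = _ := by field_simp; ring

theorem hsAux_compare {d : ℕ} {U V : EuclideanSpace ℝ (Fin d) → ℝ} (hU : Continuous U)
    (hi : Integrable (fun x => exp (-U x))) (hV : Continuous V)
    (hiV : Integrable (fun x => exp (-V x))) {C : ℝ} (hUV : ∀ x, exp (-V x) ≤ C * exp (-U x))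
    {φ : EuclideanSpace ℝ (Fin d) → ℝ} (hφ : Continuous φ) (hφ0 : ∀ x, 0 ≤ φ x) {K : ℝ}
    (hφK : ∀ x, φ x ≤ K) :
    (∫ x, exp (-V x)) * (∫ x, φ x ∂(gibbs V)) ≤
      C * ((∫ x, exp (-U x)) * (∫ x, φ x ∂(gibbs U))) := by
  have zU := integral_exp_pos hi
  have zV := integral_exp_pos hiV
  rw [gbAux_integral hU hi, gbAux_integral hV hiV, mul_inv_cancel_left₀ zU.ne',
    mul_inv_cancel_left₀ zV.ne', ← integral_const_mul]
  refine integral_mono_of_nonneg (Filter.Eventually.of_forall fun x => ?_) ?_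
    (Filter.Eventually.of_forall fun x => ?_)
  · exact mul_nonneg (exp_pos _).le (hφ0 x)
  · refine Integrable.const_mul ?_ C
    refine hi.mul_bdd (c := K) hφ.measurable.aestronglyMeasurable
      (Filter.Eventually.of_forall fun x => ?_)
    rw [Real.norm_of_nonneg (hφ0 x)]
    exact hφK x
  · simp only
    rw [← mul_assoc]
    exact mul_le_mul_of_nonneg_right (hUV x) (hφ0 x)

theorem hsAux_phi {a m : ℝ} (ha : 0 < a) (hm : 0 < m) : 0 ≤ a * log a - a * log m - a + m := by
  have := Real.log_le_sub_one_of_pos (div_pos hm ha)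
  rw [log_div hm.ne' ha.ne'] at this
  have h2 := mul_le_mul_of_nonneg_left this ha.le
  have : a * (m / a - 1) = m - a := by field_simp
  linarith

theorem hsAux_main {d : ℕ} {U V : EuclideanSpace ℝ (Fin d) → ℝ} (hU : Continuous U)
    (hi : Integrable (fun x => exp (-U x))) (hV : Continuous V)
    (hiV : Integrable (fun x => exp (-V x))) {c : ℝ} (hUV : ∀ x, U x ≤ V x)
    (hVU : ∀ x, V x ≤ U x + c) {ρ : ℝ} (hρ : 0 < ρ)
    (hconv : ∀ t s : ℝ, 0 < t → 0 < s → t + s = 1 → ∀ x y,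
      U (t • x + s • y) + ρ * t * s / 2 * ‖x - y‖ ^ 2 ≤ t * U x + s * U y)
    {f : EuclideanSpace ℝ (Fin d) → ℝ} (hf : ContDiff ℝ (⊤ : ℕ∞) f) (hfc : HasCompactSupport f)
    {ε : ℝ} (hε : 0 < ε) :
    entropy (gibbs V) (fun x => f x ^ 2 + ε) ≤
      exp c * (2 / ρ) * ∫ x, gradSq f x ∂(gibbs V) := by
  have pU := gbAux_prob hU hi
  have pV := gbAux_prob hV hiV
  have zV := integral_exp_pos hiV
  have BE := lsAux_BE hU hi hρ hconv hf hfc hε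
  set h : EuclideanSpace ℝ (Fin d) → ℝ := fun x => f x ^ 2 + ε with hh
  have hpos : ∀ x, 0 < h x := fun x => by simp only [hh]; positivity
  have hcont : Continuous h := (hf.continuous.pow 2).add continuous_const
  obtain ⟨K0, hK0⟩ := hfc.exists_bound_of_continuous hf.continuous
  have hK : ∀ x, |h x| ≤ K0 ^ 2 + ε := by
    intro x
    rw [abs_of_pos (hpos x)]
    have h1 := hK0 x
    rw [Real.norm_eq_abs] at h1
    have := sq_le_sq' (by linarith [neg_abs_le (f x), abs_nonneg (f x)]) (le_of_abs_le h1)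
    simp only [hh]; linarith
  have hcl := Real.continuous_mul_log
  have iU := fun F hF => lsAux_integrable (gibbs U) hcont hcont hK hK F hF
  have iV := fun F hF => lsAux_integrable (gibbs V) hcont hcont hK hK F hF
  have iU1 : Integrable h (gibbs U) := iU (fun a _ => a) (by fun_prop)
  have iV1 : Integrable h (gibbs V) := iV (fun a _ => a) (by fun_prop)
  have iU2 : Integrable (fun x => h x * log (h x)) (gibbs U) :=
    iU (fun a _ => a * log a) (hcl.comp continuous_fst)
  have iV2 : Integrable (fun x => h x * log (h x)) (gibbs V) :=
    iV (fun a _ => a * log a) (hcl.comp continuous_fst)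
  have mean_pos : ∀ ν : Measure (EuclideanSpace ℝ (Fin d)), IsProbabilityMeasure ν →
      Integrable h ν → 0 < ∫ x, h x ∂ν := by
    intro ν _ hintg
    have : ∫ x, ε ∂ν ≤ ∫ x, h x ∂ν := by
      refine integral_mono (integrable_const _) hintg fun x => ?_
      simp only [hh]; nlinarith [sq_nonneg (f x)]
    simp at this
    linarith
  set m := ∫ x, h x ∂(gibbs U) with hm
  have hm0 : 0 < m := mean_pos _ pU iU1
  set a := ∫ x, h x ∂(gibbs V) with ha
  have ha0 : 0 < a := mean_pos _ pV iV1
  set φ : EuclideanSpace ℝ (Fin d) → ℝ :=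
    fun x => h x * log (h x) - h x * log m - h x + m with hφ
  have hφc : Continuous φ := (((hcl.comp hcont).sub (hcont.mul continuous_const)).sub hcont).add
    continuous_const
  have hφ0 : ∀ x, 0 ≤ φ x := fun x => hsAux_phi (hpos x) hm0
  have hφi : ∀ ν : Measure (EuclideanSpace ℝ (Fin d)), IsProbabilityMeasure ν →
      Integrable h ν → Integrable (fun x => h x * log (h x)) ν →
      ∫ x, φ x ∂ν = (∫ x, h x * log (h x) ∂ν) - (∫ x, h x ∂ν) * log m - (∫ x, h x ∂ν) + m := by
    intro ν _ j1 j2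
    have j3 : Integrable (fun x => h x * log (h x) - h x * log m) ν := j2.sub (j1.mul_const _)
    have j4 : Integrable (fun x => h x * log (h x) - h x * log m - h x) ν := j3.sub j1
    simp only [hφ]
    rw [integral_add j4 (integrable_const _), integral_sub j3 j1, integral_sub j2 (j1.mul_const _),
      integral_mul_const]
    simp
  have eV := hφi _ pV iV1 iV2
  have eU := hφi _ pU iU1 iU2
  rw [← ha] at eV
  rw [← hm] at eU
  have entU : entropy (gibbs U) h = ∫ x, φ x ∂(gibbs U) := by
    rw [eU, entropy, ← hm]; ring
  have entV : entropy (gibbs V) h ≤ ∫ x, φ x ∂(gibbs V) := by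
    rw [eV, entropy, ← ha]
    have := hsAux_phi ha0 hm0
    linarith
  obtain ⟨C, hC⟩ : ∃ C, ∀ x, φ x ≤ C := by
    obtain ⟨C, hC⟩ := (isCompact_Icc (a := -(K0 ^ 2 + ε)) (b := K0 ^ 2 + ε)).exists_bound_of_continuousOn
      (f := fun y : ℝ => y * log y - y * log m - y + m)
      (by have : Continuous (fun y : ℝ => y * log y - y * log m - y + m) :=
            ((hcl.sub (by fun_prop)).sub (by fun_prop)).add continuous_const
          exact this.continuousOn)
    exact ⟨C, fun x => (le_abs_self _).trans (hC (h x) (abs_le.1 (hK x)))⟩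
  have cmp1 := hsAux_compare hU hi hV hiV (C := 1)
    (fun x => by rw [one_mul]; exact exp_le_exp.2 (by linarith [hUV x])) hφc hφ0 hC
  have gc : Continuous (gradSq f) := by
    have : Continuous (fderiv ℝ f) := hf.continuous_fderiv (by simp)
    unfold gradSq pd
    fun_prop
  have gsupp : HasCompactSupport (gradSq f) := by
    refine (hfc.fderiv ℝ).mono ?_
    intro x hx h0
    apply hx
    simp [gradSq, pd, h0]
  obtain ⟨K3, hK3⟩ := gsupp.exists_bound_of_continuous gc
  have cmp2 := hsAux_compare hV hiV hU hi (C := exp c)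
    (fun x => by rw [← exp_add]; exact exp_le_exp.2 (by linarith [hVU x])) gc
    (fun x => Finset.sum_nonneg fun i _ => sq_nonneg _) (fun x => (le_abs_self _).trans (hK3 x))
  rw [← mul_le_mul_iff_right₀ zV]
  rw [entU] at BE
  have zU := integral_exp_pos hi
  calc _ ≤ (∫ x, exp (-V x)) * ∫ x, φ x ∂(gibbs V) := by gcongr
    _ ≤ 1 * ((∫ x, exp (-U x)) * ∫ x, φ x ∂(gibbs U)) := cmp1
    _ ≤ 1 * ((∫ x, exp (-U x)) * (2 / ρ * ∫ x, gradSq f x ∂(gibbs U))) := by gcongr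
    _ = 2 / ρ * ((∫ x, exp (-U x)) * ∫ x, gradSq f x ∂(gibbs U)) := by ring
    _ ≤ 2 / ρ * (exp c * ((∫ x, exp (-V x)) * ∫ x, gradSq f x ∂(gibbs V))) := by gcongr
    _ = _ := by ring

theorem hsAux_limit {d : ℕ} (ν : Measure (EuclideanSpace ℝ (Fin d))) [IsProbabilityMeasure ν]
    {f : EuclideanSpace ℝ (Fin d) → ℝ} (hf : Continuous f) (hfc : HasCompactSupport f) {B : ℝ}
    (H : ∀ ε : ℝ, 0 < ε → entropy ν (fun x => f x ^ 2 + ε) ≤ B) :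
    entropy ν (fun x => f x ^ 2) ≤ B := by
  obtain ⟨K0, hK0⟩ := hfc.exists_bound_of_continuous hf
  have hK : ∀ x, f x ^ 2 ≤ K0 ^ 2 := by
    intro x
    have h1 := hK0 x
    rw [Real.norm_eq_abs] at h1
    exact sq_le_sq' (by linarith [neg_abs_le (f x), abs_nonneg (f x)]) (le_of_abs_le h1)
  obtain ⟨C, hC⟩ := (isCompact_Icc (a := (0 : ℝ)) (b := K0 ^ 2 + 1)).exists_bound_of_continuousOn
      Real.continuous_mul_log.continuousOn
  have ev : ∀ᶠ ε in nhdsWithin (0:ℝ) (Ioi 0), ε < 1 ∧ 0 < ε := by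
    filter_upwards [nhdsWithin_le_nhds (eventually_lt_nhds (show (0:ℝ) < 1 by norm_num)),
      self_mem_nhdsWithin] with ε h1 h2 using ⟨h1, h2⟩
  have T1 : Filter.Tendsto (fun ε : ℝ => ∫ x, (f x ^ 2 + ε) * log (f x ^ 2 + ε) ∂ν)
      (nhdsWithin 0 (Ioi 0)) (nhds (∫ x, f x ^ 2 * log (f x ^ 2) ∂ν)) := by
    refine tendsto_integral_filter_of_dominated_convergence (fun _ => C) ?_ ?_ (integrable_const _) ?_
    · refine Filter.Eventually.of_forall fun ε => ?_
      have : Continuous (fun x => (f x ^ 2 + ε) * log (f x ^ 2 + ε)) :=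
        Real.continuous_mul_log.comp ((hf.pow 2).add continuous_const)
      exact this.measurable.aestronglyMeasurable
    · filter_upwards [ev] with ε hε
      refine Filter.Eventually.of_forall fun x => ?_
      exact hC _ ⟨by have := hε.2; positivity, by linarith [hK x, hε.1]⟩
    · refine Filter.Eventually.of_forall fun x => ?_
      have : ContinuousAt (fun ε : ℝ => (f x ^ 2 + ε) * log (f x ^ 2 + ε)) 0 :=
        (Real.continuous_mul_log.comp (continuous_const.add continuous_id)).continuousAt
      have := this.tendsto
      simp only [add_zero] at this
      exact this.mono_left nhdsWithin_le_nhds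
  have i1 : Integrable (fun x => f x ^ 2) ν := by
    refine Integrable.of_bound (C := K0 ^ 2) (hf.pow 2).measurable.aestronglyMeasurable
      (Filter.Eventually.of_forall fun x => ?_)
    rw [Real.norm_of_nonneg (sq_nonneg _)]
    exact hK x
  have e1 : ∀ ε : ℝ, ∫ x, (f x ^ 2 + ε) ∂ν = (∫ x, f x ^ 2 ∂ν) + ε := by
    intro ε
    rw [integral_add i1 (integrable_const _)]
    simp
  have T2 : Filter.Tendsto (fun ε : ℝ => (∫ x, (f x ^ 2 + ε) ∂ν) * log (∫ x, (f x ^ 2 + ε) ∂ν))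
      (nhdsWithin 0 (Ioi 0)) (nhds ((∫ x, f x ^ 2 ∂ν) * log (∫ x, f x ^ 2 ∂ν))) := by
    simp only [e1]
    have : ContinuousAt (fun ε : ℝ => ((∫ x, f x ^ 2 ∂ν) + ε) * log ((∫ x, f x ^ 2 ∂ν) + ε)) 0 :=
      (Real.continuous_mul_log.comp (continuous_const.add continuous_id)).continuousAt
    have := this.tendsto
    simp only [add_zero] at this
    exact this.mono_left nhdsWithin_le_nhds
  refine le_of_tendsto (T1.sub T2) ?_
  filter_upwards [ev] with ε hε
  exact H ε hε.2

theorem dwAux_conv {d : ℕ} {ρ : ℝ} (t s : ℝ) (ht : 0 < t) (hs : 0 < s) (hts : t + s = 1)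
    (x y : EuclideanSpace ℝ (Fin d)) :
    (ρ / 2 * ‖t • x + s • y‖ ^ 2 + max (‖t • x + s • y‖ ^ 2 - 1 / 2) 0 ^ 2 / 4 - 1 / 16) +
      ρ * t * s / 2 * ‖x - y‖ ^ 2 ≤
    t * (ρ / 2 * ‖x‖ ^ 2 + max (‖x‖ ^ 2 - 1 / 2) 0 ^ 2 / 4 - 1 / 16) +
      s * (ρ / 2 * ‖y‖ ^ 2 + max (‖y‖ ^ 2 - 1 / 2) 0 ^ 2 / 4 - 1 / 16) := by
  have e : ‖t • x + s • y‖ ^ 2 = t * ‖x‖ ^ 2 + s * ‖y‖ ^ 2 - t * s * ‖x - y‖ ^ 2 := by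
    have h1 : s = 1 - t := by linarith
    rw [norm_add_sq_real, norm_sub_sq_real, norm_smul, norm_smul, real_inner_smul_left,
      real_inner_smul_right, Real.norm_of_nonneg ht.le, Real.norm_of_nonneg hs.le, h1]
    ring
  have hn : 0 ≤ t * s * ‖x - y‖ ^ 2 := by positivity
  set p := max (‖x‖ ^ 2 - 1 / 2) 0 with hp
  set q := max (‖y‖ ^ 2 - 1 / 2) 0 with hq
  set w := max (‖t • x + s • y‖ ^ 2 - 1 / 2) 0 with hw
  have p0 : 0 ≤ p := le_max_right _ _
  have q0 : 0 ≤ q := le_max_right _ _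
  have w0 : 0 ≤ w := le_max_right _ _
  have p1 : ‖x‖ ^ 2 - 1 / 2 ≤ p := le_max_left _ _
  have q1 : ‖y‖ ^ 2 - 1 / 2 ≤ q := le_max_left _ _
  have hwle : w ≤ t * p + s * q := by
    apply max_le
    · rw [e]
      nlinarith [mul_le_mul_of_nonneg_left p1 ht.le, mul_le_mul_of_nonneg_left q1 hs.le]
    · positivity
  have hsq : w ^ 2 ≤ t * p ^ 2 + s * q ^ 2 := by
    have h1 : w ^ 2 ≤ (t * p + s * q) ^ 2 := by gcongr
    have h2 : 0 ≤ t * s * (p - q) ^ 2 := by positivity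
    have h3 : (t * p + s * q) ^ 2 = t * p ^ 2 + s * q ^ 2 - t * s * (p - q) ^ 2 := by
      have h1 : s = 1 - t := by linarith
      rw [h1]; ring
    linarith
  rw [e]
  have h4 : (t + s) / 16 = 1 / 16 := by rw [hts]
  linarith [h4]

/-- Dimension-free logarithmic Sobolev inequality for the double-well
measure `μ(dx) ∝ exp(-|x|⁴/4 + β|x|²/2) dx`, `β ∈ (0, 1/2)`:
`Ent_μ(f²) ≤ (4e/(1-2β)) ∫ |∇f|² dμ`. -/
theorem lsi_doublewell {d : ℕ} (hd : 1 ≤ d) (β : ℝ) (hβ : 0 < β) (hβ' : β < 1 / 2) :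
    ∀ f : EuclideanSpace ℝ (Fin d) → ℝ, ContDiff ℝ (⊤ : ℕ∞) f → HasCompactSupport f →
      entropy (gibbs fun x => ‖x‖ ^ 4 / 4 - β * ‖x‖ ^ 2 / 2) (fun x => f x ^ 2) ≤
        4 * Real.exp 1 / (1 - 2 * β) *
          ∫ x, gradSq f x ∂(gibbs fun x => ‖x‖ ^ 4 / 4 - β * ‖x‖ ^ 2 / 2) := by
  intro f hf hfc
  set V : EuclideanSpace ℝ (Fin d) → ℝ := fun x => ‖x‖ ^ 4 / 4 - β * ‖x‖ ^ 2 / 2 with hVdef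
  obtain ⟨ρ, hρ⟩ : ∃ ρ : ℝ, ρ = 1 / 2 - β := ⟨_, rfl⟩
  have hρ0 : 0 < ρ := by linarith
  set U : EuclideanSpace ℝ (Fin d) → ℝ :=
    fun x => ρ / 2 * ‖x‖ ^ 2 + max (‖x‖ ^ 2 - 1 / 2) 0 ^ 2 / 4 - 1 / 16 with hUdef
  have hV : Continuous V := by fun_prop
  have hU : Continuous U := by fun_prop
  have hUV : ∀ x, U x ≤ V x := by
    intro x
    simp only [hUdef, hVdef, hρ]
    rcases max_cases (‖x‖ ^ 2 - 1 / 2) 0 with ⟨h, _⟩ | ⟨h, _⟩ <;> rw [h] <;>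
      nlinarith [sq_nonneg (‖x‖ ^ 2 - 1 / 2)]
  have hVU : ∀ x, V x ≤ U x + 1 / 16 := by
    intro x
    have h0 := sq_nonneg ‖x‖
    simp only [hUdef, hVdef, hρ]
    rcases max_cases (‖x‖ ^ 2 - 1 / 2) 0 with ⟨h, _⟩ | ⟨h, _⟩ <;> rw [h] <;>
      nlinarith [sq_nonneg (‖x‖ ^ 2 - 1 / 2)]
  have hgauss : Integrable (fun x : EuclideanSpace ℝ (Fin d) => exp (-(ρ / 2) * ‖x‖ ^ 2)) := by
    have := (GaussianFourier.integrable_cexp_neg_mul_sq_norm_add (b := ((ρ / 2 : ℝ) : ℂ))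
      (by simpa using hρ0) 0 (0 : EuclideanSpace ℝ (Fin d))).norm
    refine this.congr (Filter.Eventually.of_forall fun x => ?_)
    simp only [Complex.norm_exp]
    congr 1
    simp [← Complex.ofReal_pow]
  have hi : Integrable (fun x => exp (-U x)) := by
    refine (hgauss.const_mul (exp (1 / 16))).mono' (by fun_prop)
      (Filter.Eventually.of_forall fun x => ?_)
    rw [Real.norm_of_nonneg (exp_pos _).le, ← exp_add]
    apply exp_le_exp.2
    simp only [hUdef]
    nlinarith [sq_nonneg (max (‖x‖ ^ 2 - 1 / 2) 0)]
  have hiV : Integrable (fun x => exp (-V x)) := by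
    refine hi.mono' (by fun_prop) (Filter.Eventually.of_forall fun x => ?_)
    rw [Real.norm_of_nonneg (exp_pos _).le]
    exact exp_le_exp.2 (by linarith [hUV x])
  have pV := gbAux_prob hV hiV
  refine hsAux_limit (gibbs V) hf.continuous hfc fun ε hε => ?_
  refine (hsAux_main hU hi hV hiV hUV hVU hρ0 dwAux_conv hf hfc hε).trans ?_
  have hintg : 0 ≤ ∫ x, gradSq f x ∂(gibbs V) :=
    integral_nonneg fun x => Finset.sum_nonneg fun i _ => sq_nonneg _
  refine mul_le_mul_of_nonneg_right ?_ hintg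
  have e : 4 * exp 1 / (1 - 2 * β) = exp 1 * (2 / ρ) := by
    have h1 : 1 - 2 * β = 2 * ρ := by linarith
    rw [h1]; field_simp; ring
  rw [e]
  gcongr
  norm_num
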